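/- Let (Q, Σ) be a DFA with n = |Q| ≥ 4. If there exists a word w over Σ such that |Qw| = 1, then there exists a word w over Σ with |w| ≤ (n³ − n)/6 − 1 and |Qw| = 1. -/

import Mathlib

/-- The image of a finite set of states `R` under a word (list of letters),
where each letter `s` acts on states via `act s`. -/
def wordImage {Q A : Type*} [DecidableEq Q] (act : A → Q → Q) (R : Finset Q) :
    List A → Finset Q
  | [] => R
  | s :: w => wordImage act (R.image (act s)) w

/-!
A word of rank at most `n - m` avoids a set `S` of `m` states. Along a shortest word identifying
two states outside `S`, the pairs of states to be identified and the complements of the images of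
the complement of `S` form a skew intersecting system, so the skew Bollobás inequality, obtained
from the linear independence of suitable symmetric polynomials, bounds the length of that word by
`(m + 2).choose 2` (Frankl, Pin). Summing over `m ≤ n - 2` gives
`(n + 1).choose 3 = (n ^ 3 - n) / 6`.

One letter is saved by reaching rank `n - 3` within `9` letters instead of `1 + 3 + 6 = 10`. If this
is impossible, all letters that are not permutations collapse the same pair `p`, `q` and miss `p`.
Following the pairs of states which short words avoid produces a third state `r` such that every
letter maps `{p, q, r}` into itself and takes every value outside of it, so that for `n ≥ 4` no word
is synchronizing.
-/

section SkewBollobas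

variable {R : Type*} [CommRing R]

theorem linearIndependent_of_triangular [NoZeroDivisors R] {ι V : Type*} [LinearOrder ι]
    [AddCommGroup V] [Module R V] {v : ι → V} (ℓ : ι → V →ₗ[R] R)
    (hne : ∀ i, ℓ i (v i) ≠ 0) (hzero : ∀ i j, i < j → ℓ j (v i) = 0) :
    LinearIndependent R v := by
  classical
  rw [linearIndependent_iff']
  intro s g hsum
  by_contra! hg
  obtain ⟨i, his, hgi⟩ := hg
  obtain ⟨j, hj, hmax⟩ := (s.filter (g · ≠ 0)).exists_maximal ⟨i, by simp [his, hgi]⟩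
  obtain ⟨hjs, hgj⟩ := Finset.mem_filter.1 hj
  have hrest (i : ι) (hi : i ∈ s) (hij : i ≠ j) : g i * ℓ j (v i) = 0 := by
    rcases lt_or_gt_of_ne hij with hlt | hgt
    · rw [hzero i j hlt, mul_zero]
    · by_contra hne
      exact hgt.not_ge (hmax (Finset.mem_filter.2 ⟨hi, left_ne_zero_of_mul hne⟩) hgt.le)
  have happly : ∑ i ∈ s, g i * ℓ j (v i) = 0 := by simpa using congrArg (ℓ j) hsum
  rw [Finset.sum_eq_single_of_mem j hjs hrest] at happly
  exact mul_ne_zero hgj (hne j) happly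

/-- The symmetric polynomial `∏ c, f (z c)` in `k` variables, for `f` of degree at most `m`: the
coefficient of a monomial depends only on the multiset of its exponents. -/
def symCoeff (m k : ℕ) (f : Polynomial R) (s : Sym (Fin (m + 1)) k) : R :=
  (s.1.map fun a => f.coeff a).prod

/-- Evaluation at `z : κ → R` of a symmetric polynomial in `k` variables with degree at most `m` in
each, encoded as in `symCoeff`. -/
def symEval {κ : Type*} [Fintype κ] [DecidableEq κ] (m : ℕ) {k : ℕ} (hk : Fintype.card κ = k)
    (z : κ → R) : (Sym (Fin (m + 1)) k → R) →ₗ[R] R :=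
  ∑ e : κ → Fin (m + 1),
    (∏ c, z c ^ (e c : ℕ)) • LinearMap.proj (.mk (Finset.univ.val.map e) (by simpa using hk))

theorem symEval_symCoeff {κ : Type*} [Fintype κ] [DecidableEq κ] {m k : ℕ}
    (hk : Fintype.card κ = k) (z : κ → R) {f : Polynomial R} (hf : f.natDegree ≤ m) :
    symEval m hk z (symCoeff m k f) = ∏ c, f.eval (z c) := by
  have hcoeff (e : κ → Fin (m + 1)) :
      symCoeff m k f (.mk (Finset.univ.val.map e) (by simpa using hk)) = ∏ c, f.coeff (e c) := by
    simp [symCoeff]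
  simp only [Polynomial.eval_eq_sum_range' (Nat.lt_succ_of_le hf), Finset.sum_range,
    Fintype.prod_sum, Finset.prod_mul_distrib, symEval, LinearMap.sum_apply, LinearMap.smul_apply,
    LinearMap.proj_apply, hcoeff, smul_eq_mul, mul_comm]

open Polynomial in
theorem card_le_choose_of_skew_intersecting {ι α : Type*} [Fintype ι] [LinearOrder ι]
    {m k : ℕ} (T P : ι → Finset α) (hT : ∀ i, (T i).card ≤ m) (hP : ∀ i, (P i).card = k)
    (hdisj : ∀ i, Disjoint (T i) (P i)) (hskew : ∀ i j, i < j → ¬Disjoint (T i) (P j)) :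
    Fintype.card ι ≤ (m + k).choose k := by
  classical
  let f (i : ι) : (MvPolynomial α ℤ)[X] := ∏ t ∈ T i, (X - C (MvPolynomial.X t))
  have hdeg (i : ι) : (f i).natDegree ≤ m := by
    rw [natDegree_prod_of_monic _ _ fun t _ => monic_X_sub_C (MvPolynomial.X t)]
    simp [hT]
  have heval (i : ι) (z : α) : (f i).eval (MvPolynomial.X z) = 0 ↔ z ∈ T i := by
    simp [f, eval_prod, Finset.prod_eq_zero_iff, sub_eq_zero, MvPolynomial.X_inj]
  have hk (j : ι) : Fintype.card (P j) = k := by rw [Fintype.card_coe, hP]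
  have hzero (i j : ι) :
      symEval m (hk j) (fun c => MvPolynomial.X (c : α)) (symCoeff m k (f i)) = 0 ↔
      ¬Disjoint (T i) (P j) := by
    simp [symEval_symCoeff _ _ (hdeg i), Finset.prod_eq_zero_iff, heval, Finset.not_disjoint_iff,
      and_comm]
  have hli := linearIndependent_of_triangular (v := fun i => symCoeff m k (f i))
    (fun j => symEval m (hk j) fun c => MvPolynomial.X (c : α))
    (fun i h => (hzero i i).1 h (hdisj i)) (fun i j hij => (hzero i j).2 (hskew i j hij))
  simpa [Sym.card_sym_eq_choose, Nat.add_right_comm] using hli.fintype_card_le_finrank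

end SkewBollobas

theorem choose_three_eq (n : ℕ) : (n + 1).choose 3 = (n ^ 3 - n) / 6 := by
  have key (n : ℕ) : 6 * (n + 1).choose 3 + n = n ^ 3 := by
    induction n with
    | zero => rfl
    | succ n ih =>
      have hpascal : (n + 2).choose 3 = (n + 1).choose 2 + (n + 1).choose 3 :=
        Nat.choose_succ_succ (n + 1) 2
      have htwo : (n + 1).choose 2 * 2 = (n + 1) * n := by
        simpa using (Nat.add_one_mul_choose_eq n 1).symm
      rw [hpascal]
      linear_combination ih + 3 * htwo
  have := key n
  omega

section Words

variable {Q A : Type*} {act : A → Q → Q} {k : ℕ}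

/-- The transformation of the state set induced by a word, whose letters act from left to right. -/
def wordMap (act : A → Q → Q) (w : List A) (x : Q) : Q :=
  w.foldl (fun t s => act s t) x

theorem wordMap_append (u v : List A) (x : Q) :
    wordMap act (u ++ v) x = wordMap act v (wordMap act u x) := by
  simp [wordMap]

theorem wordMap_concat (w : List A) (g : A) (x : Q) :
    wordMap act (w ++ [g]) x = act g (wordMap act w x) := by
  simp [wordMap]

theorem wordImage_eq_image_wordMap [DecidableEq Q] (w : List A) (R : Finset Q) :
    wordImage act R w = R.image (wordMap act w) := by
  induction w generalizing R with
  | nil => exact Finset.image_id.symm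
  | cons s w ih => rw [wordImage, ih, Finset.image_image]; rfl

/-- Some word sends all states to a single one. -/
def IsSynchronizing (act : A → Q → Q) : Prop :=
  ∃ w z, ∀ x, wordMap act w x = z

theorem IsSynchronizing.exists_not_injOn (h : IsSynchronizing act) {R : Set Q}
    (hR : R.Nontrivial) : ∃ w, ¬Set.InjOn (wordMap act w) R := by
  obtain ⟨w, z, hw⟩ := h
  obtain ⟨x, hx, y, hy, hxy⟩ := hR
  exact ⟨w, fun hinj => hxy (hinj hx hy ((hw x).trans (hw y).symm))⟩

theorem not_isSynchronizing_of_mapsTo {X : Set Q} (hX : X.Nonempty) (hXc : Xᶜ.Nonempty)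
    (hmaps : ∀ g, Set.MapsTo (act g) X X) (hrange : ∀ g, Xᶜ ⊆ Set.range (act g)) :
    ¬IsSynchronizing act := by
  rintro ⟨w, z, hw⟩
  have hword (w : List A) :
      Set.MapsTo (wordMap act w) X X ∧ Xᶜ ⊆ Set.range (wordMap act w) := by
    induction w using List.reverseRecOn with
    | nil => exact ⟨fun x hx => hx, fun y _ => ⟨y, rfl⟩⟩
    | append_singleton w g ih =>
      refine ⟨fun x hx => wordMap_concat w g x ▸ hmaps g (ih.1 hx), fun y hy => ?_⟩
      obtain ⟨s, rfl⟩ := hrange g hy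
      obtain ⟨t, rfl⟩ := ih.2 fun hs => hy (hmaps g hs)
      exact ⟨t, wordMap_concat w g t⟩
  obtain ⟨x, hx⟩ := hX
  obtain ⟨y, hy⟩ := hXc
  obtain ⟨t, rfl⟩ := (hword w).2 hy
  exact hy (hw t ▸ hw x ▸ (hword w).1 hx)

-- Otherwise every word would miss at most one state, and that state would lie in `X`.
theorem IsSynchronizing.exists_injective_not_mapsTo [Fintype Q] (h : IsSynchronizing act)
    (hQ : 3 ≤ Fintype.card Q) {X : Set Q} (hX : X.Nonempty)
    (hcollapse : ∀ g x y, act g x = act g y → x ≠ y → X ⊆ {x, y})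
    (hmiss : ∀ g, ¬Function.Injective (act g) → ∃ m ∈ X, {m}ᶜ ⊆ Set.range (act g)) :
    ∃ g, Function.Injective (act g) ∧ ¬Set.MapsTo (act g) X X := by
  classical
  by_contra! hmaps
  have hword (w : List A) : ∃ z ∈ X, {z}ᶜ ⊆ Set.range (wordMap act w) := by
    induction w using List.reverseRecOn with
    | nil => exact hX.imp fun z hz => ⟨hz, fun y _ => ⟨y, rfl⟩⟩
    | append_singleton w g ih =>
      obtain ⟨z, hz, hzw⟩ := ih
      have hstep {s : Q} (hs : s ≠ z) : act g s ∈ Set.range (wordMap act (w ++ [g])) := by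
        obtain ⟨t, rfl⟩ := hzw hs
        exact ⟨t, wordMap_concat w g t⟩
      by_cases hg : Function.Injective (act g)
      · refine ⟨act g z, hmaps g hg hz, fun y hy => ?_⟩
        obtain ⟨s, rfl⟩ := Finite.surjective_of_injective hg y
        exact hstep (ne_of_apply_ne (act g) hy)
      · obtain ⟨m, hm, hrange⟩ := hmiss g hg
        refine ⟨m, hm, fun v hv => ?_⟩
        obtain ⟨s, rfl⟩ := hrange hv
        obtain ⟨x, y, hxy, hne⟩ := Function.not_injective_iff.1 hg
        rcases eq_or_ne s z with rfl | hs
        · rcases hcollapse g x y hxy hne hz with rfl | rfl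
          exacts [hxy ▸ hstep hne.symm, hxy ▸ hstep hne]
        · exact hstep hs
  obtain ⟨w, c, hw⟩ := h
  obtain ⟨z, -, hz⟩ := hword w
  obtain ⟨v, -, hv⟩ := Finset.exists_mem_notMem_of_card_lt_card (s := {z, c}) (t := Finset.univ)
    (Finset.card_le_two.trans_lt hQ)
  obtain ⟨hvz, hvc⟩ : v ≠ z ∧ v ≠ c := by simpa using hv
  obtain ⟨t, rfl⟩ := hz hvz
  exact hvc (hw t)

theorem IsSynchronizing.exists_not_injective [Fintype Q] (h : IsSynchronizing act)
    (hQ : 3 ≤ Fintype.card Q) : ∃ g, ¬Function.Injective (act g) := by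
  have : Nonempty Q := Fintype.card_pos_iff.1 (by omega)
  by_contra! hinj
  obtain ⟨g, -, hg⟩ := h.exists_injective_not_mapsTo hQ Set.univ_nonempty
    (fun g x y hxy hne => absurd (hinj g hxy) hne) (fun g hg => absurd (hinj g) hg)
  exact hg (Set.mapsTo_univ _ _)

/-- A set `S` of states is avoidable in `k` letters if some word of length at most `k` maps no state
into `S`; equivalently, that word has rank at most `n - |S|`. -/
def Avoidable (act : A → Q → Q) (k : ℕ) (S : Finset Q) : Prop :=
  ∃ w : List A, w.length ≤ k ∧ ∀ t, wordMap act w t ∉ S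

namespace Avoidable

variable {S T : Finset Q}

theorem mono (h : Avoidable act k S) {l : ℕ} (hkl : k ≤ l) : Avoidable act l S :=
  let ⟨w, hw, hS⟩ := h
  ⟨w, hw.trans hkl, hS⟩

theorem of_preimage_subset (h : Avoidable act k S) {u : List A}
    (hT : wordMap act u ⁻¹' T ⊆ S) : Avoidable act (k + u.length) T := by
  obtain ⟨w, hw, hS⟩ := h
  refine ⟨w ++ u, by simpa using hw, fun t ht => hS t (hT ?_)⟩
  rwa [Set.mem_preimage, ← wordMap_append]

theorem of_letter (h : Avoidable act k S) (g : A) (hT : act g ⁻¹' T ⊆ S) :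
    Avoidable act (k + 1) T :=
  h.of_preimage_subset (u := [g]) hT

theorem exists_card_lt_of_not_injOn [Finite Q] (h : Avoidable act k S) {u : List A}
    (hu : ¬Set.InjOn (wordMap act u) (Sᶜ : Set Q)) :
    ∃ T : Finset Q, S.card < T.card ∧ Avoidable act (k + u.length) T := by
  classical
  cases nonempty_fintype Q
  refine ⟨(Sᶜ.image (wordMap act u))ᶜ, ?_, h.of_preimage_subset fun x hx => ?_⟩
  · have hlt : (Sᶜ.image (wordMap act u)).card < Sᶜ.card := by
      refine Finset.card_image_le.lt_of_ne fun heq => hu ?_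
      simpa using Finset.card_image_iff.1 heq
    have := Finset.card_compl_add_card S
    have := Finset.card_compl_add_card (Sᶜ.image (wordMap act u))
    omega
  · by_contra hxS
    have hux : wordMap act u x ∈ Sᶜ.image (wordMap act u) :=
      Finset.mem_image_of_mem _ (Finset.mem_compl.2 hxS)
    exact Finset.mem_compl.1 hx hux

end Avoidable

end Words

section Frankl

variable {Q A : Type*} [Fintype Q] {act : A → Q → Q}

-- For `i < j` both states of the `j`th pair lying in the `i`th image would allow cutting letters
-- `i` to `j` out of `u`, so the pairs and the complements of the images form a skew system.
theorem length_le_of_forall_shorter_injOn {R : Finset Q} {u : List A}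
    (hu : ¬Set.InjOn (wordMap act u) R)
    (hmin : ∀ v : List A, v.length < u.length → Set.InjOn (wordMap act v) R) :
    u.length ≤ (Fintype.card Q - R.card + 2).choose 2 := by
  classical
  obtain ⟨x, hx, y, hy, huxy, hxy⟩ :
      ∃ x ∈ R, ∃ y ∈ R, wordMap act u x = wordMap act u y ∧ x ≠ y := by
    simpa [Set.InjOn] using hu
  have hinj (i : Fin u.length) : Set.InjOn (wordMap act (u.take i)) R := hmin _ (by simp)
  have hskew (i j : Fin u.length) (hij : i < j) :
      ¬(wordMap act (u.take j) x ∈ R.image (wordMap act (u.take i)) ∧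
        wordMap act (u.take j) y ∈ R.image (wordMap act (u.take i))) := by
    simp only [Finset.mem_image]
    rintro ⟨⟨x', hx', hxx'⟩, y', hy', hyy'⟩
    have hcut : Set.InjOn (wordMap act (u.take i ++ u.drop j)) R := hmin _ (by simp; omega)
    have hmerge :
        wordMap act (u.take i ++ u.drop j) x' = wordMap act (u.take i ++ u.drop j) y' := by
      rwa [wordMap_append, wordMap_append, hxx', hyy', ← wordMap_append, ← wordMap_append,
        List.take_append_drop]
    obtain rfl := hcut hx' hy' hmerge
    exact hxy (hinj j hx hy (hxx'.symm.trans hyy'))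
  have hmem (I : Finset Q) (a b : Q) : Disjoint Iᶜ {a, b} ↔ a ∈ I ∧ b ∈ I := by simp
  simpa using card_le_choose_of_skew_intersecting (m := Fintype.card Q - R.card) (k := 2)
    (fun i : Fin u.length => (R.image (wordMap act (u.take i)))ᶜ)
    (fun i => {wordMap act (u.take i) x, wordMap act (u.take i) y})
    (fun i => by rw [Finset.card_compl, Finset.card_image_of_injOn (hinj i)])
    (fun i => Finset.card_pair fun h => hxy (hinj i hx hy h))
    (fun i => by
      simpa only [hmem] using ⟨Finset.mem_image_of_mem _ hx, Finset.mem_image_of_mem _ hy⟩)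
    (fun i j hij => by simpa only [hmem] using hskew i j hij)

theorem exists_short_not_injOn {R : Finset Q} (h : ∃ u, ¬Set.InjOn (wordMap act u) R) :
    ∃ u, u.length ≤ (Fintype.card Q - R.card + 2).choose 2 ∧ ¬Set.InjOn (wordMap act u) R := by
  obtain ⟨u, hu, hmin⟩ := exists_minimalFor_of_wellFoundedLT
    (fun u : List A => ¬Set.InjOn (wordMap act u) R) List.length h
  refine ⟨u, length_le_of_forall_shorter_injOn hu fun v hv => ?_, hu⟩
  by_contra hv'
  exact hv.not_ge (hmin hv' hv.le)

theorem Avoidable.exists_card_lt (hsync : IsSynchronizing act) {k : ℕ} {S : Finset Q}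
    (h : Avoidable act k S) (hS : S.card + 2 ≤ Fintype.card Q) :
    ∃ T : Finset Q, S.card < T.card ∧ Avoidable act (k + (S.card + 2).choose 2) T := by
  classical
  have hcard : Fintype.card Q - (Sᶜ).card = S.card := by
    have := Finset.card_compl_add_card S
    omega
  have hnontrivial : Sᶜ.Nontrivial := by
    rw [← Finset.one_lt_card_iff_nontrivial, Finset.card_compl]
    omega
  obtain ⟨u, hu, hmerge⟩ := exists_short_not_injOn (hsync.exists_not_injOn hnontrivial)
  rw [hcard] at hu
  obtain ⟨T, hST, hT⟩ := h.exists_card_lt_of_not_injOn (by simpa using hmerge)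
  exact ⟨T, hST, hT.mono (by omega)⟩

end Frankl

section AvoidablePair

variable {Q A : Type*} {act : A → Q → Q} {k : ℕ} {x y x' y' p q r : Q} {g : A}

/-- `f` identifies the states `p` and `q`, is injective otherwise, and misses exactly `p`. -/
structure CollapsesPair (p q : Q) (f : Q → Q) : Prop where
  range_eq : Set.range f = {p}ᶜ
  map_eq : f p = f q
  eq_of_map_eq {s t : Q} : f s = f t → s ≠ p → s ≠ q → s = t

theorem CollapsesPair.ne_left {f : Q → Q} (hf : CollapsesPair p q f) (x : Q) : f x ≠ p :=
  hf.range_eq.subset ⟨x, rfl⟩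

theorem CollapsesPair.pair_subset {f : Q → Q} (hf : CollapsesPair p q f) (hxy : f x = f y)
    (hne : x ≠ y) : ({p, q} : Set Q) ⊆ {x, y} := by
  have hx : x = p ∨ x = q := by
    by_contra! hx
    exact hne (hf.eq_of_map_eq hxy hx.1 hx.2)
  have hy : y = p ∨ y = q := by
    by_contra! hy
    exact hne (hf.eq_of_map_eq hxy.symm hy.1 hy.2).symm
  rcases hx with rfl | rfl <;> rcases hy with rfl | rfl
  exacts [absurd rfl hne, subset_rfl, (Set.pair_comm _ _).subset, absurd rfl hne]

theorem Avoidable.map (h : Avoidable act k {x}) (hg : Function.Injective (act g))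
    (hx : act g x = x') : Avoidable act (k + 1) {x'} := by
  subst hx
  exact h.of_letter g fun t ht => by simpa [hg.eq_iff] using ht

variable [DecidableEq Q]

/-- Two distinct states which one word of length at most `k` avoids simultaneously. -/
def AvoidablePair (act : A → Q → Q) (k : ℕ) (x y : Q) : Prop :=
  x ≠ y ∧ Avoidable act k {x, y}

theorem AvoidablePair.symm (h : AvoidablePair act k x y) : AvoidablePair act k y x :=
  ⟨h.1.symm, Finset.pair_comm x y ▸ h.2⟩

theorem AvoidablePair.mono (h : AvoidablePair act k x y) {l : ℕ} (hkl : k ≤ l) :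
    AvoidablePair act l x y :=
  ⟨h.1, h.2.mono hkl⟩

theorem AvoidablePair.map (h : AvoidablePair act k x y) (hg : Function.Injective (act g))
    (hx : act g x = x') (hy : act g y = y') : AvoidablePair act (k + 1) x' y' := by
  subst hx hy
  exact ⟨hg.ne h.1, h.2.of_letter g fun t ht => by simpa [hg.eq_iff] using ht⟩

theorem Avoidable.pair_of_collapsesPair (h : Avoidable act k {x})
    (hg : CollapsesPair p q (act g)) (hxp : x ≠ p) (hxq : x ≠ q) :
    AvoidablePair act (k + 1) p (act g x) := by
  refine ⟨(hg.ne_left x).symm, h.of_letter g fun t ht => ?_⟩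
  have hgt : act g t = act g x := by simpa [hg.ne_left t] using ht
  simpa using (hg.eq_of_map_eq hgt.symm hxp hxq).symm

theorem AvoidablePair.collapse (h : AvoidablePair act k p q) (hg : CollapsesPair p q (act g)) :
    AvoidablePair act (k + 1) p (act g p) := by
  refine ⟨(hg.ne_left p).symm, h.2.of_letter g fun t ht => ?_⟩
  have hgt : act g t = act g p := by simpa [hg.ne_left t] using ht
  by_contra htpq
  obtain ⟨htp, htq⟩ : t ≠ p ∧ t ≠ q := by simpa using htpq
  exact htp (hg.eq_of_map_eq hgt htp htq)

theorem CollapsesPair.mapsTo (hg : CollapsesPair p q (act g)) (hrp : r ≠ p) (hrq : r ≠ q)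
    {X : Set Q} (hp6 : ∀ z, AvoidablePair act 6 p z → z ∈ X) (hr : Avoidable act 3 {r})
    (hpq5 : AvoidablePair act 5 p q) : Set.MapsTo (act g) {p, q, r} X := by
  have hgp : act g p ∈ X := hp6 _ (hpq5.collapse hg)
  have hgr : act g r ∈ X := hp6 _ ((hr.pair_of_collapsesPair hg hrp hrq).mono (by norm_num))
  rintro z (rfl | rfl | rfl)
  exacts [hgp, hg.map_eq ▸ hgp, hgr]

end AvoidablePair

/-- The configuration forced when no word of length at most `9` has rank at most `n - 3`: all
letters that are not permutations collapse the same pair `p`, `q` and miss `p`, permutations move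
`p` at most to `q`, and a pair avoidable in `8` letters has to meet `{p, q}`, since otherwise a
collapsing letter would produce three avoidable states. -/
structure CriticalPair {Q A : Type*} [DecidableEq Q] (act : A → Q → Q) (p q : Q) : Prop where
  ne : p ≠ q
  avoidable_left : Avoidable act 1 {p}
  injective_or_collapsesPair (g : A) : Function.Injective (act g) ∨ CollapsesPair p q (act g)
  map_left_eq_or (g : A) : Function.Injective (act g) → act g p = p ∨ act g p = q
  right_mem {x y : Q} : AvoidablePair act 8 x y → x ≠ p → x ≠ q → y = p ∨ y = q

namespace CriticalPair

variable {Q A : Type*} [DecidableEq Q] {act : A → Q → Q} {p q r z : Q} {a b c : A}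

section Link

theorem map_of_avoidablePair_right (h : CriticalPair act p q) (hc : Function.Injective (act c))
    (hcq : act c q = r) (hrp : r ≠ p) (hrq : r ≠ q) (hz : AvoidablePair act 7 q z) :
    act c z = p ∨ act c z = q :=
  h.right_mem (hz.map hc hcq rfl) hrp hrq

theorem map_map_of_avoidablePair_left (h : CriticalPair act p q)
    (hb : Function.Injective (act b)) (hbp : act b p = q) (hc : Function.Injective (act c))
    (hcq : act c q = r) (hrp : r ≠ p) (hrq : r ≠ q) (hz : AvoidablePair act 6 p z) :
    act c (act b z) = p ∨ act c (act b z) = q :=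
  h.map_of_avoidablePair_right hc hcq hrp hrq (hz.map hb hbp rfl)

theorem avoidable_of_map_map (h : CriticalPair act p q)
    (hb : Function.Injective (act b)) (hbp : act b p = q) (hc : Function.Injective (act c))
    (hcq : act c q = r) : Avoidable act 3 {r} :=
  (h.avoidable_left.map hb hbp).map hc hcq

end Link

section Chain

-- Otherwise `s = act b r` lies outside `{p, q}`, so that by `right_mem` any short avoidable pair
-- through `s` has its other state in `{p, q}`. This forces `b` to be the cycle `p → q → r → s → p`
-- on these states and then makes `{s, r}` avoidable.
theorem map_third_eq_left_of_chain (h : CriticalPair act p q) (ha : CollapsesPair p q (act a))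
    (hb : Function.Injective (act b)) (hbp : act b p = q) (hbq : act b q = r)
    (hrp : r ≠ p) (hrq : r ≠ q) : act b r = p := by
  by_contra hsp
  obtain ⟨s, hbr⟩ : ∃ s, act b r = s := ⟨_, rfl⟩
  rw [hbr] at hsp
  have hsq : s ≠ q := by
    rintro rfl
    exact hrp (hb (hbr.trans hbp.symm))
  have hsr : s ≠ r := by
    rintro rfl
    exact hrq (hb (hbr.trans hbq.symm))
  have hr3 := h.avoidable_of_map_map hb hbp hb hbq
  have hpa4 : AvoidablePair act 4 p (act a r) := hr3.pair_of_collapsesPair ha hrp hrq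
  have hs7 : AvoidablePair act 7 s (act b (act b (act b (act a r)))) :=
    ((hpa4.map hb hbp rfl).map hb hbq rfl).map hb hbr rfl
  have hbba : act b (act b (act a r)) = p := by
    refine (h.map_map_of_avoidablePair_left hb hbp hb hbq hrp hrq
      (hpa4.mono (by norm_num))).resolve_right fun hq => ?_
    rw [hq, hbq] at hs7
    exact (h.right_mem (hs7.mono (by norm_num)) hsp hsq).elim hrp hrq
  rw [hbba, hbp] at hs7
  have hbs : act b s = p := by
    refine (h.right_mem (hs7.symm.map hb hbq rfl) hrp hrq).resolve_right fun hq => ?_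
    exact hsp (hb (hq.trans hbp.symm))
  have hps5 : AvoidablePair act 5 p (act a s) :=
    (hr3.map hb hbr).pair_of_collapsesPair ha hsp hsq
  rcases h.map_map_of_avoidablePair_left hb hbp hb hbq hrp hrq (hps5.mono (by norm_num))
    with hbbs | hbbs
  · have has : act a s = act a r := hb (hb (by rw [hbbs, hbba]))
    exact hsr (ha.eq_of_map_eq has hsp hsq)
  · have has : act a s = s := hb (hb (by rw [hbbs, hbs, hbp]))
    rw [has] at hps5
    have hrs8 : AvoidablePair act 8 s r :=
      (((hps5.map hb hbp hbs).map hb hbq hbp).map hb hbr hbq)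
    exact (h.right_mem hrs8 hsp hsq).elim hrp hrq

theorem collapse_third_eq_or_eq_of_cycle (h : CriticalPair act p q) (ha : CollapsesPair p q (act a))
    (hb : Function.Injective (act b)) (hbp : act b p = q) (hbq : act b q = r)
    (hbr : act b r = p) (hrp : r ≠ p) (hrq : r ≠ q) : act a r = q ∨ act a r = r := by
  have hpa4 : AvoidablePair act 4 p (act a r) :=
    (h.avoidable_of_map_map hb hbp hb hbq).pair_of_collapsesPair ha hrp hrq
  refine (h.map_map_of_avoidablePair_left hb hbp hb hbq hrp hrq
    (hpa4.mono (by norm_num))).imp (fun hp => ?_) (fun hq => ?_)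
  · exact hb (hb (by rw [hp, hbq, hbr]))
  · exact hb (hb (by rw [hq, hbr, hbp]))

end Chain

section Swap

theorem eq_right_or_map_map_eq_of_swap (h : CriticalPair act p q)
    (hb : Function.Injective (act b)) (hbp : act b p = q) (hbq : act b q = p)
    (hc : Function.Injective (act c)) (hcp : act c p = p) (hcq : act c q = r)
    (hrp : r ≠ p) (hrq : r ≠ q) (hz : AvoidablePair act 6 p z) :
    z = q ∨ act c (act b z) = q :=
  (h.map_map_of_avoidablePair_left hb hbp hc hcq hrp hrq hz).imp_left fun hp =>
    hb (hc (by rw [hp, hbq, hcp]))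

theorem map_third_of_swap_of_avoidablePair (h : CriticalPair act p q)
    (hb : Function.Injective (act b)) (hbp : act b p = q) (hbq : act b q = p)
    (hc : Function.Injective (act c)) (hcp : act c p = p) (hcq : act c q = r)
    (hrp : r ≠ p) (hrq : r ≠ q) (hpq4 : AvoidablePair act 4 p q) :
    act c r = q ∧ act b r = r := by
  have hlink {z : Q} := h.eq_right_or_map_map_eq_of_swap (z := z) hb hbp hbq hc hcp hcq hrp hrq
  have hpr5 : AvoidablePair act 5 p r := hpq4.map hc hcp hcq
  have hcbr : act c (act b r) = q := (hlink (hpr5.mono (by norm_num))).resolve_left hrq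
  have hcr : act c r = q := by
    refine (hlink (hpr5.map hc hcp rfl)).resolve_right fun hcbcr => hrq ?_
    exact hc ((hb (hc (hcbcr.trans hcbr.symm))).trans hcq.symm)
  exact ⟨hcr, hc (hcbr.trans hcr.symm)⟩

theorem map_third_of_swap_of_collapse_ne (h : CriticalPair act p q)
    (ha : CollapsesPair p q (act a))
    (hb : Function.Injective (act b)) (hbp : act b p = q) (hbq : act b q = p)
    (hc : Function.Injective (act c)) (hcp : act c p = p) (hcq : act c q = r)
    (hrp : r ≠ p) (hrq : r ≠ q) (haq : act a r ≠ q) :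
    act c r = q ∧ act b r = r ∧ act a r = r := by
  have hlink {z : Q} := h.eq_right_or_map_map_eq_of_swap (z := z) hb hbp hbq hc hcp hcq hrp hrq
  have hr3 := h.avoidable_of_map_map hb hbp hc hcq
  have hpa4 : AvoidablePair act 4 p (act a r) := hr3.pair_of_collapsesPair ha hrp hrq
  have hcba : act c (act b (act a r)) = q := (hlink (hpa4.mono (by norm_num))).resolve_left haq
  have hqr6 : AvoidablePair act 6 q r := ((hpa4.map hb hbp rfl).map hc hcq hcba).symm
  have hcr : act c r = q := by
    refine (h.map_of_avoidablePair_right hc hcq hrp hrq (hqr6.mono (by norm_num))).resolve_left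
      fun hp => hrp (hc (hp.trans hcp.symm))
  have hba : act b (act a r) = r := hc (hcba.trans hcr.symm)
  have hbr : act b r = r := by
    by_contra hbr
    have hbrp : act b r ≠ p := fun hp => hrq (hb (hp.trans hbq.symm))
    have hbrq : act b r ≠ q := fun hq => hrp (hb (hq.trans hbp.symm))
    have hp5 : AvoidablePair act 5 p (act a (act b r)) :=
      (hr3.map hb rfl).pair_of_collapsesPair ha hbrp hbrq
    rcases hlink (hp5.mono (by norm_num)) with habr | hcbabr
    · have hcbr := (hlink (hp5.map hc hcp (habr ▸ hcq))).resolve_left hrq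
      exact hbr (hc (hcbr.trans hcr.symm))
    · have habr : act a (act b r) = act a r := hb (hc (hcbabr.trans hcba.symm))
      exact hbr (ha.eq_of_map_eq habr hbrp hbrq)
  exact ⟨hcr, hbr, hb (hba.trans hbr.symm)⟩

end Swap

section Triple

theorem mapsTo_of_injective (h : CriticalPair act p q) {g : A} (hg : Function.Injective (act g))
    (hp6 : ∀ z, AvoidablePair act 6 p z → z ∈ ({p, q, r} : Set Q))
    (hq7 : ∀ z, AvoidablePair act 7 q z → z ∈ ({p, q, r} : Set Q))
    (hpq5 : AvoidablePair act 5 p q) (hpr6 : AvoidablePair act 6 p r)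
    (hpr : AvoidablePair act 5 p r ∨ AvoidablePair act 4 p q ∧ AvoidablePair act 5 q r) :
    Set.MapsTo (act g) {p, q, r} {p, q, r} := by
  have hgp : act g p ∈ ({p, q, r} : Set Q) := by
    rcases h.map_left_eq_or g hg with hgp | hgp <;> simp [hgp]
  have hgq : act g q ∈ ({p, q, r} : Set Q) := by
    rcases h.map_left_eq_or g hg with hgp | hgp
    · exact hp6 _ (hpq5.map hg hgp rfl)
    · exact hq7 _ ((hpq5.map hg hgp rfl).mono (by norm_num))
  have hgr : act g r ∈ ({p, q, r} : Set Q) := by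
    rcases h.map_left_eq_or g hg with hgp | hgp
    · rcases hpr with hpr5 | ⟨hpq4, hqr5⟩
      · exact hp6 _ (hpr5.map hg hgp rfl)
      · rcases hgq with hgqp | hgqq | hgqr
        · exact absurd (hg (hgp.trans hgqp.symm)) h.ne
        · exact hq7 _ ((hqr5.map hg hgqq rfl).mono (by norm_num))
        · exact hp6 _ ((hpq4.map hg hgp hgqr).map hg hgp rfl)
    · exact hq7 _ (hpr6.map hg hgp rfl)
  rintro z (rfl | rfl | rfl)
  exacts [hgp, hgq, hgr]

end Triple

section NotSynchronizing

theorem mem_of_avoidablePair_right (h : CriticalPair act p q) (hc : Function.Injective (act c))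
    (hcq : act c q = r) (hrp : r ≠ p) (hrq : r ≠ q)
    (hcX : Set.MapsTo (act c) {p, q, r} {p, q, r}) (hz : AvoidablePair act 7 q z) :
    z ∈ ({p, q, r} : Set Q) := by
  have himage : act c '' {p, q, r} = {p, q, r} :=
    (((Set.toFinite _).injOn_iff_bijOn_of_mapsTo hcX).1 hc.injOn).image_eq
  rw [← hc.mem_set_image, himage]
  exact (h.map_of_avoidablePair_right hc hcq hrp hrq hz).imp_right Or.inl

theorem mem_of_avoidablePair_left (h : CriticalPair act p q) (hb : Function.Injective (act b))
    (hbp : act b p = q) (hbX : Set.MapsTo (act b) {p, q, r} {p, q, r})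
    (hc : Function.Injective (act c)) (hcq : act c q = r) (hrp : r ≠ p) (hrq : r ≠ q)
    (hcX : Set.MapsTo (act c) {p, q, r} {p, q, r}) (hz : AvoidablePair act 6 p z) :
    z ∈ ({p, q, r} : Set Q) := by
  have himage : act b '' {p, q, r} = {p, q, r} :=
    (((Set.toFinite _).injOn_iff_bijOn_of_mapsTo hbX).1 hb.injOn).image_eq
  rw [← hb.mem_set_image, himage]
  exact h.mem_of_avoidablePair_right hc hcq hrp hrq hcX (hz.map hb hbp rfl)

variable [Fintype Q]

theorem not_isSynchronizing_of_mapsTo_triple (h : CriticalPair act p q)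
    (hQ : 4 ≤ Fintype.card Q) (hb : Function.Injective (act b)) (hbp : act b p = q)
    (hbX : Set.MapsTo (act b) {p, q, r} {p, q, r}) (hc : Function.Injective (act c))
    (hcq : act c q = r) (hrp : r ≠ p) (hrq : r ≠ q)
    (hcX : Set.MapsTo (act c) {p, q, r} {p, q, r})
    (hpq5 : AvoidablePair act 5 p q) (hpr6 : AvoidablePair act 6 p r)
    (hpr : AvoidablePair act 5 p r ∨ AvoidablePair act 4 p q ∧ AvoidablePair act 5 q r) :
    ¬IsSynchronizing act := by
  have hp6 (z : Q) (hz : AvoidablePair act 6 p z) : z ∈ ({p, q, r} : Set Q) :=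
    h.mem_of_avoidablePair_left hb hbp hbX hc hcq hrp hrq hcX hz
  have hq7 (z : Q) (hz : AvoidablePair act 7 q z) : z ∈ ({p, q, r} : Set Q) :=
    h.mem_of_avoidablePair_right hc hcq hrp hrq hcX hz
  have hr3 : Avoidable act 3 {r} := h.avoidable_of_map_map hb hbp hc hcq
  obtain ⟨y, -, hy⟩ := Finset.exists_mem_notMem_of_card_lt_card (s := {p, q, r})
    (t := Finset.univ) (Finset.card_le_three.trans_lt hQ)
  refine not_isSynchronizing_of_mapsTo (X := {p, q, r}) ⟨p, Or.inl rfl⟩ ⟨y, by simpa using hy⟩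
    (fun g => ?_) (fun g => ?_)
  · rcases h.injective_or_collapsesPair g with hg | hg
    · exact h.mapsTo_of_injective hg hp6 hq7 hpq5 hpr6 hpr
    · exact hg.mapsTo hrp hrq hp6 hr3 hpq5
  · rcases h.injective_or_collapsesPair g with hg | hg
    · simp [(Finite.surjective_of_injective hg).range_eq]
    · rw [hg.range_eq, Set.compl_subset_compl]
      simp

theorem not_isSynchronizing_of_chain (h : CriticalPair act p q) (hQ : 4 ≤ Fintype.card Q)
    (ha : CollapsesPair p q (act a)) (hb : Function.Injective (act b)) (hbp : act b p = q)
    (hbq : act b q = r) (hrp : r ≠ p) (hrq : r ≠ q) : ¬IsSynchronizing act := by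
  have hbr : act b r = p := h.map_third_eq_left_of_chain ha hb hbp hbq hrp hrq
  have hbX : Set.MapsTo (act b) {p, q, r} {p, q, r} := by
    simp [Set.mapsTo_iff_subset_preimage, Set.insert_subset_iff, hbp, hbq, hbr]
  have hpa4 : AvoidablePair act 4 p (act a r) :=
    (h.avoidable_of_map_map hb hbp hb hbq).pair_of_collapsesPair ha hrp hrq
  refine h.not_isSynchronizing_of_mapsTo_triple hQ hb hbp hbX hb hbq hrp hrq hbX ?_ ?_ ?_ <;>
    rcases h.collapse_third_eq_or_eq_of_cycle ha hb hbp hbq hbr hrp hrq with har | har <;>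
    rw [har] at hpa4
  · exact hpa4.mono (by norm_num)
  · exact (hpa4.map hb hbp hbr).symm
  · exact ((hpa4.map hb hbp hbq).map hb hbq hbr).symm
  · exact hpa4.mono (by norm_num)
  · exact Or.inr ⟨hpa4, hpa4.map hb hbp hbq⟩
  · exact Or.inl (hpa4.mono (by norm_num))

theorem not_isSynchronizing_of_swap (h : CriticalPair act p q) (hQ : 4 ≤ Fintype.card Q)
    (ha : CollapsesPair p q (act a)) (hb : Function.Injective (act b)) (hbp : act b p = q)
    (hbq : act b q = p) (hc : Function.Injective (act c)) (hcp : act c p = p)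
    (hcq : act c q = r) (hrp : r ≠ p) (hrq : r ≠ q) : ¬IsSynchronizing act := by
  have hpa4 : AvoidablePair act 4 p (act a r) :=
    (h.avoidable_of_map_map hb hbp hc hcq).pair_of_collapsesPair ha hrp hrq
  obtain ⟨hcr, hbr, hpq5, hpr5⟩ : act c r = q ∧ act b r = r ∧ AvoidablePair act 5 p q ∧
      AvoidablePair act 5 p r := by
    by_cases haq : act a r = q
    · rw [haq] at hpa4
      obtain ⟨hcr, hbr⟩ :=
        h.map_third_of_swap_of_avoidablePair hb hbp hbq hc hcp hcq hrp hrq hpa4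
      exact ⟨hcr, hbr, hpa4.mono (by norm_num), hpa4.map hc hcp hcq⟩
    · obtain ⟨hcr, hbr, har⟩ :=
        h.map_third_of_swap_of_collapse_ne ha hb hbp hbq hc hcp hcq hrp hrq haq
      rw [har] at hpa4
      exact ⟨hcr, hbr, hpa4.map hc hcp hcr, hpa4.mono (by norm_num)⟩
  have hbX : Set.MapsTo (act b) {p, q, r} {p, q, r} := by
    simp [Set.mapsTo_iff_subset_preimage, Set.insert_subset_iff, hbp, hbq, hbr]
  have hcX : Set.MapsTo (act c) {p, q, r} {p, q, r} := by
    simp [Set.mapsTo_iff_subset_preimage, Set.insert_subset_iff, hcp, hcq, hcr]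
  exact h.not_isSynchronizing_of_mapsTo_triple hQ hb hbp hbX hc hcq hrp hrq hcX hpq5
    (hpr5.mono (by norm_num)) (Or.inl hpr5)

theorem exists_injective_not_mapsTo (h : CriticalPair act p q) (hsync : IsSynchronizing act)
    (hQ : 3 ≤ Fintype.card Q) {X : Set Q} (hp : p ∈ X) (hX : X ⊆ {p, q}) :
    ∃ g, Function.Injective (act g) ∧ ¬Set.MapsTo (act g) X X := by
  refine hsync.exists_injective_not_mapsTo hQ ⟨p, hp⟩ (fun g x y hxy hne => ?_) (fun g hg => ?_)
  · rcases h.injective_or_collapsesPair g with hg | hg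
    exacts [absurd (hg hxy) hne, hX.trans (hg.pair_subset hxy hne)]
  · exact ⟨p, hp, ((h.injective_or_collapsesPair g).resolve_left hg).range_eq.superset⟩

theorem exists_injective_map_left_eq_right (h : CriticalPair act p q)
    (hsync : IsSynchronizing act) (hQ : 3 ≤ Fintype.card Q) :
    ∃ b, Function.Injective (act b) ∧ act b p = q := by
  obtain ⟨b, hb, hbX⟩ := h.exists_injective_not_mapsTo hsync hQ (Set.mem_singleton p) (by simp)
  exact ⟨b, hb, (h.map_left_eq_or b hb).resolve_left fun hbp => hbX (by simp [hbp])⟩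

theorem exists_injective_map_right_ne (h : CriticalPair act p q)
    (hsync : IsSynchronizing act) (hQ : 3 ≤ Fintype.card Q) :
    ∃ c, Function.Injective (act c) ∧ act c q ≠ p ∧ act c q ≠ q := by
  obtain ⟨c, hc, hcX⟩ := h.exists_injective_not_mapsTo hsync hQ (Set.mem_insert p {q}) subset_rfl
  refine ⟨c, hc, ?_⟩
  by_contra! hcq
  refine hcX ?_
  rintro z (rfl | rfl)
  exacts [h.map_left_eq_or c hc, or_iff_not_imp_left.2 hcq]

theorem not_isSynchronizing (h : CriticalPair act p q) (hQ : 4 ≤ Fintype.card Q) :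
    ¬IsSynchronizing act := by
  intro hsync
  have hQ3 : 3 ≤ Fintype.card Q := by omega
  obtain ⟨a, ha⟩ := hsync.exists_not_injective hQ3
  replace ha := (h.injective_or_collapsesPair a).resolve_left ha
  obtain ⟨b, hb, hbp⟩ := h.exists_injective_map_left_eq_right hsync hQ3
  obtain ⟨c, hc, hcqp, hcqq⟩ := h.exists_injective_map_right_ne hsync hQ3
  rcases h.map_left_eq_or c hc with hcp | hcp
  · by_cases hbq : act b q = p
    · exact h.not_isSynchronizing_of_swap hQ ha hb hbp hbq hc hcp rfl hcqp hcqq hsync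
    · have hbqq : act b q ≠ q := fun hbqq => h.ne (hb (hbp.trans hbqq.symm))
      exact h.not_isSynchronizing_of_chain hQ ha hb hbp rfl hbq hbqq hsync
  · exact h.not_isSynchronizing_of_chain hQ ha hc hcp rfl hcqp hcqq hsync

end NotSynchronizing

end CriticalPair

section ExistsCriticalPair

variable {Q A : Type*} {act : A → Q → Q} {x y z p q : Q} {g : A}

theorem card_le_one_of_avoidable_three [Fintype Q] (hsync : IsSynchronizing act)
    (hQ : 4 ≤ Fintype.card Q) (h9 : ∀ S, Avoidable act 9 S → S.card ≤ 2) {S : Finset Q}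
    (hS : Avoidable act 3 S) : S.card ≤ 1 := by
  by_contra! hlt
  have hcard : S.card = 2 := (h9 S (hS.mono (by norm_num))).antisymm hlt
  obtain ⟨T, hST, hT⟩ := hS.exists_card_lt hsync (by omega)
  rw [hcard] at hST hT
  exact hST.not_ge (h9 T hT)

theorem eq_or_eq_of_map_eq [Finite Q] (h3 : ∀ S, Avoidable act 3 S → S.card ≤ 1)
    (hxy : act g x = act g y) (hne : x ≠ y) (hz : Avoidable act 2 {z}) : z = x ∨ z = y := by
  by_contra! hzxy
  obtain ⟨T, hzT, hT⟩ := hz.exists_card_lt_of_not_injOn (u := [g]) fun hinj =>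
    hne (hinj (by simpa using hzxy.1.symm) (by simpa using hzxy.2.symm) hxy)
  exact hzT.not_ge (h3 T hT)

theorem exists_range_eq_compl_singleton [Finite Q] (h3 : ∀ S, Avoidable act 3 S → S.card ≤ 1)
    (hg : ¬Function.Injective (act g)) :
    ∃ m, Set.range (act g) = {m}ᶜ ∧ Avoidable act 1 {m} := by
  classical
  obtain ⟨m, hm⟩ : ∃ m, ∀ x, act g x ≠ m := by
    simpa [Finite.injective_iff_surjective, Function.Surjective] using hg
  have havoid {S : Finset Q} (hS : ∀ x, act g x ∉ S) : Avoidable act 1 S := ⟨[g], le_rfl, hS⟩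
  refine ⟨m, Set.Subset.antisymm (Set.range_subset_iff.2 hm) fun m' hm' => ?_,
    havoid (by simpa using hm)⟩
  by_contra hrange
  have hpair : ({m', m} : Finset Q).card ≤ 1 :=
    h3 _ ((havoid fun x => by simpa [hm x] using fun hx => hrange ⟨x, hx⟩).mono (by norm_num))
  exact hm' (Finset.card_le_one.1 hpair _ (by simp) _ (by simp))

theorem collapsesPair_of_not_injective [Finite Q] (h3 : ∀ S, Avoidable act 3 S → S.card ≤ 1)
    (hp : Avoidable act 1 {p}) (hq : ¬Avoidable act 1 {q}) (hq2 : Avoidable act 2 {q})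
    (hg : ¬Function.Injective (act g)) : CollapsesPair p q (act g) := by
  have hpq : p ≠ q := fun hpq => hq (hpq ▸ hp)
  have hp2 : Avoidable act 2 {p} := hp.mono (by norm_num)
  have hmem {s t z : Q} (hst : act g s = act g t) (hne : s ≠ t) (hz : Avoidable act 2 {z}) :
      z = s ∨ z = t := eq_or_eq_of_map_eq h3 hst hne hz
  obtain ⟨m, hrange, hm⟩ := exists_range_eq_compl_singleton h3 hg
  obtain ⟨x, y, hxy, hne⟩ := Function.not_injective_iff.1 hg
  refine ⟨?_, ?_, fun {s t} hst hsp hsq => ?_⟩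
  · have hmp : m = p := by
      have := hmem hxy hne (hm.mono (by norm_num))
      have := hmem hxy hne hp2
      have := hmem hxy hne hq2
      have : m ≠ q := fun hmq => hq (hmq ▸ hm)
      grind
    rw [hrange, hmp]
  · rcases hmem hxy hne hp2 with rfl | rfl <;> rcases hmem hxy hne hq2 with rfl | rfl
    exacts [absurd rfl hpq, hxy, hxy.symm, absurd rfl hpq]
  · by_contra hne
    have hpt : p = t := (hmem hst hne hp2).resolve_left hsp.symm
    have hqt : q = t := (hmem hst hne hq2).resolve_left hsq.symm
    exact hpq (hpt.trans hqt.symm)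

theorem exists_injective_not_avoidable_map [Fintype Q] (hsync : IsSynchronizing act)
    (hQ : 3 ≤ Fintype.card Q) (h3 : ∀ S, Avoidable act 3 S → S.card ≤ 1) :
    ∃ b p, Function.Injective (act b) ∧ Avoidable act 1 {p} ∧ ¬Avoidable act 1 {act b p} := by
  obtain ⟨a, ha⟩ := hsync.exists_not_injective hQ
  obtain ⟨m, -, hm⟩ := exists_range_eq_compl_singleton h3 ha
  obtain ⟨b, hb, hbX⟩ := hsync.exists_injective_not_mapsTo hQ (X := {x | Avoidable act 1 {x}})
    ⟨m, hm⟩ (fun g x y hxy hne z hz => eq_or_eq_of_map_eq h3 hxy hne (hz.mono (by norm_num)))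
    (fun g hg => (exists_range_eq_compl_singleton h3 hg).imp fun m hm => ⟨hm.2, hm.1.superset⟩)
  simp only [Set.MapsTo, Set.mem_ofPred_eq, not_forall] at hbX
  obtain ⟨p, hp, hbp⟩ := hbX
  exact ⟨b, p, hb, hp, hbp⟩

theorem exists_criticalPair [Fintype Q] [DecidableEq Q] (hsync : IsSynchronizing act)
    (hQ : 4 ≤ Fintype.card Q) (h9 : ∀ S, Avoidable act 9 S → S.card ≤ 2) :
    ∃ p q, CriticalPair act p q := by
  have hQ3 : 3 ≤ Fintype.card Q := by omega
  have h3 (S : Finset Q) : Avoidable act 3 S → S.card ≤ 1 :=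
    card_le_one_of_avoidable_three hsync hQ h9
  obtain ⟨b, p, hb, hp1, hq1⟩ := exists_injective_not_avoidable_map hsync hQ3 h3
  obtain ⟨q, hbp⟩ : ∃ q, act b p = q := ⟨_, rfl⟩
  rw [hbp] at hq1
  have hcollapse {g : A} : ¬Function.Injective (act g) → CollapsesPair p q (act g) :=
    collapsesPair_of_not_injective h3 hp1 hq1 (hp1.map hb hbp)
  obtain ⟨a, ha⟩ := hsync.exists_not_injective hQ3
  have hap : act a p = act a q := (hcollapse ha).map_eq
  have hpq : p ≠ q := fun hpq => hq1 (hpq ▸ hp1)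
  refine ⟨p, q, hpq, hp1, fun g => or_iff_not_imp_left.2 hcollapse, fun g hg => ?_, ?_⟩
  · exact eq_or_eq_of_map_eq h3 hap hpq (hp1.map hg rfl)
  · intro x y hxy hxp hxq
    by_contra! hy
    obtain ⟨T, hT, hT9⟩ := hxy.2.exists_card_lt_of_not_injOn (u := [a]) fun hinj =>
      hpq (hinj (by simp [hxp.symm, hy.1.symm]) (by simp [hxq.symm, hy.2.symm]) hap)
    rw [Finset.card_pair hxy.1] at hT
    exact hT.not_ge (h9 T hT9)

theorem exists_avoidable_nine [Fintype Q] (hsync : IsSynchronizing act)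
    (hQ : 4 ≤ Fintype.card Q) : ∃ S, 3 ≤ S.card ∧ Avoidable act 9 S := by
  classical
  by_contra! h9
  obtain ⟨p, q, h⟩ := exists_criticalPair hsync hQ fun S hS =>
    Nat.le_of_lt_succ (not_le.1 fun hcard => h9 S hcard hS)
  exact h.not_isSynchronizing hQ hsync

end ExistsCriticalPair

section ShortSynchronizingWord

variable {Q A : Type*} [Fintype Q] {act : A → Q → Q}

theorem exists_avoidable_choose_three_sub_one (hsync : IsSynchronizing act) {m : ℕ}
    (hm : 3 ≤ m) (hmQ : m + 1 ≤ Fintype.card Q) :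
    ∃ S, m ≤ S.card ∧ Avoidable act ((m + 2).choose 3 - 1) S := by
  induction m, hm using Nat.le_induction with
  | base => exact exists_avoidable_nine hsync hmQ
  | succ m hm ih =>
    obtain ⟨S, hmS, hS⟩ := ih (by omega)
    have hpascal : (m + 1 + 2).choose 3 = (m + 2).choose 2 + (m + 2).choose 3 :=
      Nat.choose_succ_succ (m + 2) 2
    have hpos : 0 < (m + 2).choose 3 := Nat.choose_pos (by omega)
    rcases hmS.eq_or_lt with rfl | hlt
    · obtain ⟨T, hST, hT⟩ := hS.exists_card_lt hsync hmQ
      exact ⟨T, hST, hT.mono (by omega)⟩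
    · exact ⟨S, hlt, hS.mono (by omega)⟩

variable [DecidableEq Q]

theorem isSynchronizing_of_card_wordImage_eq_one {w : List A}
    (hw : (wordImage act Finset.univ w).card = 1) : IsSynchronizing act := by
  obtain ⟨z, hz⟩ := Finset.card_eq_one.1 hw
  rw [wordImage_eq_image_wordMap] at hz
  refine ⟨w, z, fun x => ?_⟩
  simpa [hz] using Finset.mem_image_of_mem (wordMap act w) (Finset.mem_univ x)

theorem Avoidable.exists_card_wordImage_eq_one [Nonempty Q] {k : ℕ} {S : Finset Q}
    (h : Avoidable act k S) (hS : Fintype.card Q ≤ S.card + 1) :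
    ∃ w : List A, w.length ≤ k ∧ (wordImage act Finset.univ w).card = 1 := by
  obtain ⟨w, hw, hwS⟩ := h
  refine ⟨w, hw, le_antisymm ?_ ?_⟩
  · have hsub : wordImage act Finset.univ w ⊆ Sᶜ := by
      rw [wordImage_eq_image_wordMap, Finset.image_subset_iff]
      simpa using hwS
    have hle := Finset.card_le_card hsub
    rw [Finset.card_compl] at hle
    omega
  · rw [wordImage_eq_image_wordMap]
    exact (Finset.univ_nonempty.image _).card_pos

end ShortSynchronizingWord

theorem stmt_4 {Q A : Type*} [Fintype Q] [DecidableEq Q] (act : A → Q → Q)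
    (hn : 4 ≤ Fintype.card Q)
    (h : ∃ w : List A, (wordImage act Finset.univ w).card = 1) :
    ∃ w : List A,
      w.length ≤ (Fintype.card Q ^ 3 - Fintype.card Q) / 6 - 1 ∧
      (wordImage act Finset.univ w).card = 1 := by
  obtain ⟨w, hw⟩ := h
  have : Nonempty Q := Fintype.card_pos_iff.1 (by omega)
  obtain ⟨m, hm⟩ : ∃ m, Fintype.card Q = m + 1 := ⟨Fintype.card Q - 1, by omega⟩
  obtain ⟨S, hmS, hS⟩ := exists_avoidable_choose_three_sub_one
    (isSynchronizing_of_card_wordImage_eq_one hw) (m := m) (by omega) hm.ge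
  rw [← choose_three_eq, hm]
  exact hS.exists_card_wordImage_eq_one (by omega)
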